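/- Let λ ≥ 2 and n ≥ 1 be integers. Let S be a nonzero rational trigonometric polynomial, nonnegative on ℝⁿ, continuous at 0 with S(0) = 1 and 1/S ∈ L^∞, and let τ be a rational trigonometric polynomial with τ(0) = 1. Suppose the oblique sub-QMF condition holds: 1/S(λξ) − Σ_{γ∈Γ} |τ(ξ + γ)|²/S(ξ + γ) ≥ 0 for all ξ at which this expression is defined. Then the infinite product Φ(ξ) := Π_{j=1}^∞ τ(λ^{−j}ξ) converges for almost every ξ ∈ ℝⁿ, the resulting function Φ belongs to L²(ℝⁿ), and Φ(λξ) = τ(ξ) Φ(ξ) for almost every ξ; consequently the inverse Fourier transform φ_τ of Φ is a refinable function in L²(ℝⁿ) with refinement mask τ. -/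

import Mathlib

open MeasureTheory Finset Filter Topology

noncomputable section

/-- `f` is a trigonometric polynomial on ℝⁿ: a finite sum ξ ↦ Σ_{k∈F} h(k) e^{−i k·ξ}. -/
def IsTrigPoly (n : ℕ) (f : (Fin n → ℝ) → ℂ) : Prop :=
  ∃ (F : Finset (Fin n → ℤ)) (h : (Fin n → ℤ) → ℂ),
    ∀ ξ : Fin n → ℝ,
      f ξ = ∑ k ∈ F, h k * Complex.exp (-Complex.I * ∑ i, (k i : ℂ) * (ξ i : ℂ))

/-- Λ = {0,…,λ−1}ⁿ as a finite subset of ℤⁿ. -/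
def Lambda (lam n : ℕ) : Finset (Fin n → ℤ) :=
  Fintype.piFinset fun _ => Finset.Ico (0 : ℤ) (lam : ℤ)

/-- The translate ξ + (2π/λ)·ρ, i.e. ξ + γ for γ = (2π/λ)ρ ∈ Γ. -/
def gshift (lam n : ℕ) (ξ : Fin n → ℝ) (ρ : Fin n → ℤ) : Fin n → ℝ :=
  fun i => ξ i + (2 * Real.pi / lam) * (ρ i : ℝ)

/-- e^{i ν·ξ}. -/
def eI (n : ℕ) (ν : Fin n → ℤ) (ξ : Fin n → ℝ) : ℂ :=
  Complex.exp (Complex.I * ∑ i, (ν i : ℂ) * (ξ i : ℂ))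

/-- The dilate λ·ξ. -/
def dil (lam n : ℕ) (ξ : Fin n → ℝ) : Fin n → ℝ := fun i => (lam : ℝ) * ξ i
/-- A rational trigonometric polynomial: a quotient of two trigonometric polynomials
(with denominator not identically zero).  Its value at ξ (using Lean's total division,
with junk value 0 where the denominator vanishes) is `num ξ / den ξ`; it is *defined*
at ξ precisely when `den ξ ≠ 0`. -/
structure RatTrigPoly (n : ℕ) where
  num : (Fin n → ℝ) → ℂ
  den : (Fin n → ℝ) → ℂ
  num_trig : IsTrigPoly n num
  den_trig : IsTrigPoly n den
  den_ne : ∃ ξ, den ξ ≠ 0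

/-- Pointwise value of a rational trigonometric polynomial. -/
def RatTrigPoly.eval {n : ℕ} (f : RatTrigPoly n) (ξ : Fin n → ℝ) : ℂ := f.num ξ / f.den ξ

instance {n : ℕ} : CoeFun (RatTrigPoly n) (fun _ => (Fin n → ℝ) → ℂ) := ⟨RatTrigPoly.eval⟩

/-- `f` is defined at `ξ` iff its denominator does not vanish there. -/
def RatTrigPoly.DefinedAt {n : ℕ} (f : RatTrigPoly n) (ξ : Fin n → ℝ) : Prop := f.den ξ ≠ 0
/-- The Fourier integral ĝ(x) = ∫ g(ξ) e^{−i x·ξ} dξ (defined as a Bochner integral;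
junk value 0 if not integrable). -/
def fourierInt (n : ℕ) (g : (Fin n → ℝ) → ℂ) (x : Fin n → ℝ) : ℂ :=
  ∫ ξ : Fin n → ℝ, g ξ * Complex.exp (-Complex.I * ∑ i, (x i : ℂ) * (ξ i : ℂ))

/-- `Φ` is the Fourier transform of `φ` in the L² (Plancherel) sense: both are in L²
and the multiplication formula ∫ Φ·g = ∫ φ·ĝ holds for every test function
g ∈ L¹ ∩ L². -/
def IsL2FourierPair (n : ℕ) (φ Φ : (Fin n → ℝ) → ℂ) : Prop :=
  MeasureTheory.MemLp φ 2 MeasureTheory.volume ∧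
  MeasureTheory.MemLp Φ 2 MeasureTheory.volume ∧
  ∀ g : (Fin n → ℝ) → ℂ, MeasureTheory.Integrable g MeasureTheory.volume →
    MeasureTheory.MemLp g 2 MeasureTheory.volume →
    ∫ ξ : Fin n → ℝ, Φ ξ * g ξ = ∫ x : Fin n → ℝ, φ x * fourierInt n g x

/-!
In the variable `x = λ^{-M}ξ` the density `|∏_{j<M} τ(λ^j x)|² w(x)`, with `w = 1/S`, is
`2π`-periodic. Averaging it over the translates by `Γ`, the factor `|τ|² w` is the only one that is
not already `Γ`-periodic, and the sub-QMF condition bounds its sum by `w(λx)`; since dilation by `λ`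
preserves integrals over the torus, `λ^{nM}` times the integral of the density over a period box is
nonincreasing in `M`. In the variable `ξ` this bounds the weighted norm over the box dilated by
`λ^M` of the partial product `∏_{j=1}^M τ(λ^{-j}ξ)`. These boxes exhaust `ℝⁿ` and
`w(λ^{-M}ξ) → w(0) > 0`, so Fatou's lemma puts the limit `Φ` into `L²`. The product converges
pointwise because `τ(λ^{-j}ξ) - 1 = O(λ^{-j})`.
-/

open Asymptotics
open scoped ENNReal NNReal FourierTransform

/-! ### Zero sets of analytic functions -/

section AnalyticZeros

variable {E F : Type*} [NormedAddCommGroup E] [NormedSpace ℝ E]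
  [NormedAddCommGroup F] [NormedSpace ℝ F] {f : E → F}

lemma ae_ne_zero_add_smul_of_analyticOnNhd (hf : AnalyticOnNhd ℝ f Set.univ) {x₀ : E}
    (hx₀ : f x₀ ≠ 0) (y : E) : ∀ᵐ t : ℝ, f (x₀ + t • y) ≠ 0 := by
  have hline : AnalyticOnNhd ℝ (fun t : ℝ => f (x₀ + t • y)) Set.univ := fun t _ =>
    (hf _ trivial).comp (f := fun t : ℝ => x₀ + t • y) (by fun_prop)
  have hcodisc := hline.preimage_zero_mem_codiscrete (x := 0) (by simpa using hx₀)
  rw [← Measure.restrict_univ (μ := (volume : Measure ℝ))]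
  exact ae_restrict_le_codiscreteWithin MeasurableSet.univ hcodisc

/-- By Fubini, almost every dilate of the zero set about a point where `f` does not vanish is
null, and every dilate of a non-null set is non-null. -/
lemma ae_ne_zero_of_analyticOnNhd [FiniteDimensional ℝ E] [MeasurableSpace E] [BorelSpace E]
    {μ : Measure E} [μ.IsAddHaarMeasure] (hf : AnalyticOnNhd ℝ f Set.univ) (h : ∃ x, f x ≠ 0) :
    ∀ᵐ x ∂μ, f x ≠ 0 := by
  obtain ⟨x₀, hx₀⟩ := h
  have hcont : Continuous f := continuousOn_univ.1 hf.continuousOn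
  have hmeas : MeasurableSet {p : E × ℝ | f (x₀ + p.2 • p.1) ≠ 0} :=
    (isOpen_ne_fun (by fun_prop) continuous_const).measurableSet
  have hdilates : ∀ᵐ t : ℝ, ∀ᵐ y ∂μ, f (x₀ + t • y) ≠ 0 :=
    (Measure.ae_ae_comm hmeas).1 (ae_of_all _ (ae_ne_zero_add_smul_of_analyticOnNhd hf hx₀))
  obtain ⟨t, hft, ht⟩ := (hdilates.and (Measure.ae_ne volume 0)).exists
  have hquasi : Measure.QuasiMeasurePreserving (fun x : E => t⁻¹ • (x - x₀)) μ μ :=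
    (Measure.quasiMeasurePreserving_smul μ (inv_ne_zero ht)).comp
      (measurePreserving_sub_right μ x₀).quasiMeasurePreserving
  filter_upwards [hquasi.ae hft] with x hx
  simpa [smul_inv_smul₀ ht] using hx

end AnalyticZeros

/-! ### Multiply periodic functions -/

section MultiPeriodic

variable {ι β : Type*} {T : ℝ}

/-- Functions on `ℝ^ι` that are periodic with respect to the lattice `T ℤ^ι`. -/
def IsMultiPeriodic (T : ℝ) (f : (ι → ℝ) → β) : Prop :=
  ∀ m : ι → ℤ, Function.Periodic f fun i => m i * T

lemma IsMultiPeriodic.comp_left {γ : Type*} {f : (ι → ℝ) → β} (hf : IsMultiPeriodic T f)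
    (g : β → γ) : IsMultiPeriodic T fun x => g (f x) :=
  fun m x => congrArg g (hf m x)

lemma IsMultiPeriodic.mul [Mul β] {f g : (ι → ℝ) → β} (hf : IsMultiPeriodic T f)
    (hg : IsMultiPeriodic T g) : IsMultiPeriodic T fun x => f x * g x :=
  fun m => (hf m).mul (hg m)

lemma IsMultiPeriodic.comp_natCast_smul {f : (ι → ℝ) → β} (hf : IsMultiPeriodic T f) (k : ℕ) :
    IsMultiPeriodic T fun x => f ((k : ℝ) • x) := fun m x => by
  convert hf (fun i => k * m i) ((k : ℝ) • x) using 2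
  ext i
  simp [mul_add, mul_assoc]

/-- The fundamental domain `(-T/2, T/2]^ι` of the lattice `T ℤ^ι`, centered so that it is a
neighborhood of the origin. -/
def centeredBox (ι : Type*) (T : ℝ) : Set (ι → ℝ) :=
  Set.univ.pi fun _ => Set.Ioc (-(T / 2)) (T / 2)

lemma measurableSet_centeredBox [Countable ι] : MeasurableSet (centeredBox ι T) :=
  MeasurableSet.univ_pi fun _ => measurableSet_Ioc

lemma volume_centeredBox_lt_top [Fintype ι] : volume (centeredBox ι T) < ⊤ := by
  rw [centeredBox, volume_pi_pi]
  exact ENNReal.prod_lt_top fun _ _ => measure_Ioc_lt_top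

variable [Fact (0 < T)]

lemma centeredBox_mem_nhds_zero [Finite ι] : centeredBox ι T ∈ 𝓝 0 := by
  have hT : 0 < T := Fact.out
  exact set_pi_mem_nhds Set.finite_univ fun _ _ =>
    Ioc_mem_nhds (neg_lt_zero.2 (half_pos hT)) (half_pos hT)

lemma IsMultiPeriodic.exists_comp_coe_addCircle [MeasurableSpace β] {f : (ι → ℝ) → β}
    (hf : IsMultiPeriodic T f) (hfm : Measurable f) :
    ∃ g : (ι → AddCircle T) → β, Measurable g ∧ ∀ x, f x = g fun i => (x i : AddCircle T) := by
  let s : AddCircle T → ℝ := fun y => AddCircle.measurableEquivIoc T 0 y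
  have hs : Measurable s :=
    measurable_subtype_coe.comp (AddCircle.measurableEquivIoc T 0).measurable
  refine ⟨fun y => f fun i => s (y i),
    hfm.comp (measurable_pi_lambda _ fun i => hs.comp (measurable_pi_apply i)), fun x => ?_⟩
  have hrepr : ∀ i, ∃ m : ℤ, s (x i) = x i + m * T := fun i => by
    have hsec : ((s (x i) : ℝ) : AddCircle T) = x i :=
      (AddCircle.equivIoc T 0).symm_apply_apply _
    rw [← sub_eq_zero, ← AddCircle.coe_sub, AddCircle.coe_eq_zero_iff] at hsec
    obtain ⟨m, hm⟩ := hsec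
    exact ⟨m, by rw [zsmul_eq_mul] at hm; linarith⟩
  choose m hm using hrepr
  simp only [hm]
  exact (hf m x).symm

variable [Fintype ι]

lemma measurePreserving_pi_coe_addCircle :
    MeasurePreserving (fun (x : ι → ℝ) i => (x i : AddCircle T))
      (volume.restrict (centeredBox ι T)) volume := by
  have hmk := measurePreserving_pi (ι := ι) _ _
    fun _ => AddCircle.measurePreserving_mk T (-(T / 2))
  rwa [← Measure.restrict_pi_pi, show -(T / 2) + T = T / 2 by ring] at hmk

lemma IsMultiPeriodic.setLIntegral_comp {f : (ι → ℝ) → ℝ≥0∞} (hf : IsMultiPeriodic T f)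
    (hfm : Measurable f) {ψ : (ι → ℝ) → ι → ℝ} {φ : (ι → AddCircle T) → ι → AddCircle T}
    (hφ : MeasurePreserving φ)
    (hψ : ∀ x, (fun i => (ψ x i : AddCircle T)) = φ fun i => (x i : AddCircle T)) :
    ∫⁻ x in centeredBox ι T, f (ψ x) = ∫⁻ x in centeredBox ι T, f x := by
  obtain ⟨g, hg, hfg⟩ := hf.exists_comp_coe_addCircle hfm
  simp only [hfg, hψ]
  have hcoe := measurePreserving_pi_coe_addCircle (ι := ι) (T := T)
  exact ((hφ.comp hcoe).lintegral_comp hg).trans (hcoe.lintegral_comp hg).symm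

lemma IsMultiPeriodic.setLIntegral_comp_add_right {f : (ι → ℝ) → ℝ≥0∞}
    (hf : IsMultiPeriodic T f) (hfm : Measurable f) (v : ι → ℝ) :
    ∫⁻ x in centeredBox ι T, f (x + v) = ∫⁻ x in centeredBox ι T, f x :=
  hf.setLIntegral_comp hfm (measurePreserving_add_right volume fun i => (v i : AddCircle T))
    fun _ => rfl

lemma IsMultiPeriodic.setLIntegral_comp_natCast_smul {f : (ι → ℝ) → ℝ≥0∞}
    (hf : IsMultiPeriodic T f) (hfm : Measurable f) {k : ℕ} (hk : k ≠ 0) :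
    ∫⁻ x in centeredBox ι T, f ((k : ℝ) • x) = ∫⁻ x in centeredBox ι T, f x :=
  hf.setLIntegral_comp hfm (φ := fun y i => (k : ℤ) • y i)
    (volume_preserving_pi fun _ =>
      Measure.measurePreserving_zsmul volume (Int.natCast_ne_zero.2 hk))
    fun x => by ext i; simp [← AddCircle.coe_zsmul, -natCast_zsmul]

end MultiPeriodic

local instance : Fact (0 < 2 * Real.pi) := ⟨Real.two_pi_pos⟩

/-! ### Trigonometric polynomials -/

section TrigPoly

variable {n : ℕ}

lemma IsTrigPoly.analyticOnNhd {f : (Fin n → ℝ) → ℂ} (hf : IsTrigPoly n f) :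
    AnalyticOnNhd ℝ f Set.univ := by
  obtain ⟨F, h, hf⟩ := hf
  rw [funext hf]
  have hcoord (i : Fin n) : AnalyticOnNhd ℝ (fun ξ : Fin n → ℝ => (ξ i : ℂ)) Set.univ :=
    (Complex.ofRealCLM.comp
      (ContinuousLinearMap.proj (R := ℝ) (φ := fun _ : Fin n => ℝ) i)).analyticOnNhd _
  intro ξ hξ
  refine Finset.analyticAt_fun_sum _ fun k _ => analyticAt_const.mul ?_
  exact (analyticAt_cexp.restrictScalars (𝕜 := ℝ)).comp <| analyticAt_const.mul <|
    Finset.analyticAt_fun_sum _ fun i _ => analyticAt_const.mul (hcoord i ξ hξ)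

lemma IsTrigPoly.continuous {f : (Fin n → ℝ) → ℂ} (hf : IsTrigPoly n f) : Continuous f :=
  continuousOn_univ.1 hf.analyticOnNhd.continuousOn

lemma IsTrigPoly.isMultiPeriodic {f : (Fin n → ℝ) → ℂ} (hf : IsTrigPoly n f) :
    IsMultiPeriodic (2 * Real.pi) f := fun m ξ => by
  obtain ⟨F, h, hf⟩ := hf
  rw [hf, hf]
  refine Finset.sum_congr rfl fun k _ => congrArg (h k * ·) ?_
  refine Complex.exp_eq_exp_iff_exists_int.2 ⟨-∑ i, k i * m i, ?_⟩
  simp only [Pi.add_apply]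
  push_cast
  simp only [mul_add, Finset.sum_add_distrib, ← mul_assoc, ← Finset.sum_mul]
  ring

lemma RatTrigPoly.measurable (f : RatTrigPoly n) : Measurable f :=
  f.num_trig.continuous.measurable.div f.den_trig.continuous.measurable

lemma RatTrigPoly.isMultiPeriodic (f : RatTrigPoly n) :
    IsMultiPeriodic (2 * Real.pi) f := fun m ξ => by
  simp only [RatTrigPoly.eval, f.num_trig.isMultiPeriodic m ξ, f.den_trig.isMultiPeriodic m ξ]

lemma RatTrigPoly.ae_definedAt (f : RatTrigPoly n) : ∀ᵐ ξ, f.DefinedAt ξ :=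
  ae_ne_zero_of_analyticOnNhd f.den_trig.analyticOnNhd f.den_ne

lemma RatTrigPoly.ae_ne_zero (f : RatTrigPoly n) (h : ∃ ξ, f ξ ≠ 0) : ∀ᵐ ξ, f ξ ≠ 0 := by
  have hnum : ∃ ξ, f.num ξ ≠ 0 := h.imp fun _ hξ => (div_ne_zero_iff.1 hξ).1
  filter_upwards [ae_ne_zero_of_analyticOnNhd f.num_trig.analyticOnNhd hnum, f.ae_definedAt]
    with ξ hn hd using div_ne_zero hn hd

lemma RatTrigPoly.differentiableAt (f : RatTrigPoly n) {ξ : Fin n → ℝ} (hξ : f.DefinedAt ξ) :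
    DifferentiableAt ℝ f ξ :=
  ((f.num_trig.analyticOnNhd ξ trivial).div (f.den_trig.analyticOnNhd ξ trivial)
    hξ).differentiableAt

end TrigPoly

/-! ### The infinite product -/

lemma summable_norm_comp_pow_smul_sub {E F : Type*} [NormedAddCommGroup E] [NormedSpace ℝ E]
    [NormedAddCommGroup F] {f : E → F} {a : F} (hf : (fun x => f x - a) =O[𝓝 0] fun x => x)
    {r : ℝ} (hr : |r| < 1) (x : E) : Summable fun j : ℕ => ‖f (r ^ j • x) - a‖ := by
  have hlim : Tendsto (fun j : ℕ => r ^ j • x) atTop (𝓝 0) := by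
    simpa using (tendsto_pow_atTop_nhds_zero_of_abs_lt_one hr).smul_const x
  refine summable_of_isBigO_nat (summable_geometric_of_lt_one (abs_nonneg r) hr)
    ((hf.comp_tendsto hlim).norm_left.trans (.of_bound ‖x‖ (Eventually.of_forall fun j => ?_)))
  simp [norm_smul, mul_comm]

section MaskProduct

variable {lam n : ℕ} {τ : (Fin n → ℝ) → ℂ}

lemma dil_eq_smul (ξ : Fin n → ℝ) : dil lam n ξ = (lam : ℝ) • ξ := rfl

lemma dil_gshift (hlam : lam ≠ 0) (ξ : Fin n → ℝ) (ρ : Fin n → ℤ) :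
    dil lam n (gshift lam n ξ ρ) = dil lam n ξ + fun i => ρ i * (2 * Real.pi) := by
  ext i
  simp only [dil, gshift, Pi.add_apply]
  field_simp

/-- The partial product `∏_{j=1}^M τ(λ^{-j}ξ)`. -/
def maskProduct (lam : ℕ) (τ : (Fin n → ℝ) → ℂ) (M : ℕ) (ξ : Fin n → ℝ) : ℂ :=
  ∏ j ∈ Finset.Icc 1 M, τ fun i => ξ i / (lam : ℝ) ^ j

lemma maskProduct_zero (ξ : Fin n → ℝ) : maskProduct lam τ 0 ξ = 1 := by
  simp [maskProduct]

lemma maskProduct_succ (M : ℕ) (ξ : Fin n → ℝ) :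
    maskProduct lam τ (M + 1) ξ = maskProduct lam τ M ξ * τ (((lam : ℝ)⁻¹) ^ (M + 1) • ξ) := by
  rw [maskProduct, Finset.prod_Icc_succ_top (Nat.le_add_left 1 M), maskProduct]
  congr 2
  ext i
  simp [div_eq_inv_mul]

lemma maskProduct_eq_prod_range (M : ℕ) (ξ : Fin n → ℝ) :
    maskProduct lam τ M ξ = ∏ j ∈ Finset.range M, τ (((lam : ℝ)⁻¹) ^ (j + 1) • ξ) := by
  induction M with
  | zero => simp [maskProduct_zero]
  | succ M ih => rw [maskProduct_succ, ih, Finset.prod_range_succ]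

lemma maskProduct_succ_dil (hlam : lam ≠ 0) (M : ℕ) (ξ : Fin n → ℝ) :
    maskProduct lam τ (M + 1) (dil lam n ξ) = τ ξ * maskProduct lam τ M ξ := by
  have hl : (lam : ℝ) ≠ 0 := Nat.cast_ne_zero.2 hlam
  simp only [maskProduct_eq_prod_range, Finset.prod_range_succ', dil_eq_smul, smul_smul]
  simp [pow_succ, hl, mul_comm]

lemma maskProduct_succ_pow_smul (hlam : lam ≠ 0) (M : ℕ) (ξ : Fin n → ℝ) :
    maskProduct lam τ (M + 1) ((lam : ℝ) ^ (M + 1) • ξ) =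
      τ ξ * maskProduct lam τ M ((lam : ℝ) ^ M • dil lam n ξ) := by
  have hl : (lam : ℝ) ≠ 0 := Nat.cast_ne_zero.2 hlam
  rw [maskProduct_succ, smul_smul, inv_pow, inv_mul_cancel₀ (pow_ne_zero _ hl), one_smul,
    mul_comm, dil_eq_smul, smul_smul, pow_succ]

lemma measurable_maskProduct (hτ : Measurable τ) (M : ℕ) : Measurable (maskProduct lam τ M) :=
  Finset.measurable_fun_prod _ fun _ _ => hτ.comp (by fun_prop)

lemma isMultiPeriodic_maskProduct (hlam : lam ≠ 0) (hτ : IsMultiPeriodic (2 * Real.pi) τ) (M : ℕ) :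
    IsMultiPeriodic (2 * Real.pi) fun ξ => maskProduct lam τ M ((lam : ℝ) ^ M • ξ) := by
  induction M with
  | zero => exact fun m ξ => by simp only [maskProduct_zero]
  | succ M ih =>
    simp only [maskProduct_succ_pow_smul hlam]
    exact hτ.mul (ih.comp_natCast_smul lam)

lemma exists_tendsto_maskProduct (hlam : 2 ≤ lam)
    (hτ : (fun ξ => τ ξ - 1) =O[𝓝 0] fun ξ => ξ) (ξ : Fin n → ℝ) :
    ∃ L, Tendsto (fun M => maskProduct lam τ M ξ) atTop (𝓝 L) := by
  have hr : |(lam : ℝ)⁻¹| < 1 := by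
    rw [abs_of_nonneg (by positivity)]
    exact inv_lt_one_of_one_lt₀ (by exact_mod_cast hlam)
  have hsum := (summable_nat_add_iff 1).2 (summable_norm_comp_pow_smul_sub hτ hr ξ)
  have hlim := (multipliable_one_add_of_summable hsum).hasProd.tendsto_prod_nat
  simp only [add_sub_cancel] at hlim
  exact ⟨_, hlim.congr fun M => (maskProduct_eq_prod_range M ξ).symm⟩

end MaskProduct

/-! ### The energy bound -/

lemma lintegral_comp_inv_smul {E : Type*} [NormedAddCommGroup E] [NormedSpace ℝ E]
    [MeasurableSpace E] [BorelSpace E] [FiniteDimensional ℝ E] (μ : Measure E)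
    [μ.IsAddHaarMeasure] {f : E → ℝ≥0∞} (hf : Measurable f) {r : ℝ} (hr : r ≠ 0) :
    ∫⁻ x, f (r⁻¹ • x) ∂μ = ENNReal.ofReal |r ^ Module.finrank ℝ E| * ∫⁻ x, f x ∂μ := by
  rw [← lintegral_map hf (measurable_const_smul r⁻¹),
    Measure.map_addHaar_smul μ (inv_ne_zero hr), lintegral_smul_measure, inv_pow, inv_inv,
    smul_eq_mul]

section MaskEnergy

variable {lam n : ℕ}

lemma card_Lambda : (Lambda lam n).card = lam ^ n := by
  simp [Lambda, Fintype.card_piFinset]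

/-- The pointwise bound is integrated over a period box, which is preserved both by the shifts on
the left and, up to periodicity, by the dilation on the right. -/
lemma pow_mul_setLIntegral_le_of_sum_gshift_le (hlam : lam ≠ 0) {F G : (Fin n → ℝ) → ℝ≥0∞}
    (hF : Measurable F) (hFper : IsMultiPeriodic (2 * Real.pi) F)
    (hG : Measurable G) (hGper : IsMultiPeriodic (2 * Real.pi) G)
    (h : ∀ᵐ ξ, ∑ ρ ∈ Lambda lam n, F (gshift lam n ξ ρ) ≤ G (dil lam n ξ)) :
    (lam : ℝ≥0∞) ^ n * ∫⁻ ξ in centeredBox (Fin n) (2 * Real.pi), F ξ ≤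
      ∫⁻ ξ in centeredBox (Fin n) (2 * Real.pi), G ξ := by
  have hshift (ρ : Fin n → ℤ) : ∫⁻ ξ in centeredBox (Fin n) (2 * Real.pi), F (gshift lam n ξ ρ) =
      ∫⁻ ξ in centeredBox (Fin n) (2 * Real.pi), F ξ :=
    hFper.setLIntegral_comp_add_right hF _
  calc (lam : ℝ≥0∞) ^ n * ∫⁻ ξ in centeredBox (Fin n) (2 * Real.pi), F ξ
      = ∑ ρ ∈ Lambda lam n,
          ∫⁻ ξ in centeredBox (Fin n) (2 * Real.pi), F (gshift lam n ξ ρ) := by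
        simp only [hshift, Finset.sum_const, card_Lambda, nsmul_eq_mul, Nat.cast_pow]
    _ = ∫⁻ ξ in centeredBox (Fin n) (2 * Real.pi),
          ∑ ρ ∈ Lambda lam n, F (gshift lam n ξ ρ) :=
        (lintegral_finsetSum _ fun ρ _ => hF.comp (measurable_add_const _)).symm
    _ ≤ ∫⁻ ξ in centeredBox (Fin n) (2 * Real.pi), G (dil lam n ξ) :=
        lintegral_mono_ae (ae_restrict_of_ae h)
    _ = ∫⁻ ξ in centeredBox (Fin n) (2 * Real.pi), G ξ :=
        hGper.setLIntegral_comp_natCast_smul hG hlam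

variable {τ : (Fin n → ℝ) → ℂ} {w : (Fin n → ℝ) → ℝ≥0∞}

/-- The weighted energy density `|∏_{j<M} τ(λ^j x)|² w(x)` of the `M`-th partial product, in the
variable `x = λ^{-M}ξ` in which it is periodic. -/
def maskEnergy (lam : ℕ) (τ : (Fin n → ℝ) → ℂ) (w : (Fin n → ℝ) → ℝ≥0∞) (M : ℕ)
    (x : Fin n → ℝ) : ℝ≥0∞ :=
  ‖maskProduct lam τ M ((lam : ℝ) ^ M • x)‖ₑ ^ 2 * w x

/-- The oblique sub-QMF condition for the mask `τ`, with a weight `w` in place of `1/S`. It is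
required almost everywhere, so that the points where `τ` or `1/S` is undefined do not matter. -/
def IsSubQMF (lam : ℕ) (τ : (Fin n → ℝ) → ℂ) (w : (Fin n → ℝ) → ℝ≥0∞) : Prop :=
  ∀ᵐ ξ, ∑ ρ ∈ Lambda lam n, ‖τ (gshift lam n ξ ρ)‖ₑ ^ 2 * w (gshift lam n ξ ρ) ≤ w (dil lam n ξ)

lemma maskEnergy_zero : maskEnergy lam τ w 0 = w := by
  ext x
  simp [maskEnergy, maskProduct_zero]

lemma measurable_maskEnergy (hτ : Measurable τ) (hw : Measurable w) (M : ℕ) :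
    Measurable (maskEnergy lam τ w M) :=
  (((measurable_maskProduct hτ M).comp (measurable_const_smul _)).enorm.pow_const 2).mul hw

lemma isMultiPeriodic_maskEnergy (hlam : lam ≠ 0) (hτ : IsMultiPeriodic (2 * Real.pi) τ)
    (hw : IsMultiPeriodic (2 * Real.pi) w) (M : ℕ) :
    IsMultiPeriodic (2 * Real.pi) (maskEnergy lam τ w M) :=
  ((isMultiPeriodic_maskProduct hlam hτ M).comp_left fun z => ‖z‖ₑ ^ 2).mul hw

lemma maskEnergy_succ_gshift (hlam : lam ≠ 0) (hτ : IsMultiPeriodic (2 * Real.pi) τ) (M : ℕ)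
    (ξ : Fin n → ℝ) (ρ : Fin n → ℤ) :
    maskEnergy lam τ w (M + 1) (gshift lam n ξ ρ) =
      ‖maskProduct lam τ M ((lam : ℝ) ^ M • dil lam n ξ)‖ₑ ^ 2 *
        (‖τ (gshift lam n ξ ρ)‖ₑ ^ 2 * w (gshift lam n ξ ρ)) := by
  have hper : maskProduct lam τ M ((lam : ℝ) ^ M • (dil lam n ξ + fun i => ρ i * (2 * Real.pi))) =
      maskProduct lam τ M ((lam : ℝ) ^ M • dil lam n ξ) :=
    isMultiPeriodic_maskProduct hlam hτ M ρ (dil lam n ξ)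
  rw [maskEnergy, maskProduct_succ_pow_smul hlam, dil_gshift hlam, hper, enorm_mul]
  ring

lemma sum_maskEnergy_succ_gshift_le (hlam : lam ≠ 0) (hτ : IsMultiPeriodic (2 * Real.pi) τ)
    (hqmf : IsSubQMF lam τ w) (M : ℕ) :
    ∀ᵐ ξ, ∑ ρ ∈ Lambda lam n, maskEnergy lam τ w (M + 1) (gshift lam n ξ ρ) ≤
      maskEnergy lam τ w M (dil lam n ξ) := by
  filter_upwards [hqmf] with ξ hξ
  simp only [maskEnergy_succ_gshift hlam hτ, ← Finset.mul_sum]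
  exact mul_le_mul_right hξ _

lemma pow_mul_setLIntegral_maskEnergy_le (hlam : lam ≠ 0) (hτ : Measurable τ)
    (hτper : IsMultiPeriodic (2 * Real.pi) τ) (hw : Measurable w)
    (hwper : IsMultiPeriodic (2 * Real.pi) w) (hqmf : IsSubQMF lam τ w) (M : ℕ) :
    ((lam : ℝ≥0∞) ^ n) ^ M * ∫⁻ x in centeredBox (Fin n) (2 * Real.pi), maskEnergy lam τ w M x ≤
      ∫⁻ x in centeredBox (Fin n) (2 * Real.pi), w x := by
  induction M with
  | zero => simp only [pow_zero, one_mul, maskEnergy_zero, le_refl]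
  | succ M ih =>
    refine le_trans ?_ ih
    rw [pow_succ, mul_assoc]
    exact mul_le_mul_right (pow_mul_setLIntegral_le_of_sum_gshift_le hlam
      (measurable_maskEnergy hτ hw _) (isMultiPeriodic_maskEnergy hlam hτper hwper _)
      (measurable_maskEnergy hτ hw _) (isMultiPeriodic_maskEnergy hlam hτper hwper _)
      (sum_maskEnergy_succ_gshift_le hlam hτper hqmf M)) _

lemma lintegral_indicator_maskEnergy_le (hlam : lam ≠ 0) (hτ : Measurable τ)
    (hτper : IsMultiPeriodic (2 * Real.pi) τ) (hw : Measurable w)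
    (hwper : IsMultiPeriodic (2 * Real.pi) w) (hqmf : IsSubQMF lam τ w) (M : ℕ) :
    ∫⁻ ξ, (centeredBox (Fin n) (2 * Real.pi)).indicator (maskEnergy lam τ w M)
      (((lam : ℝ) ^ M)⁻¹ • ξ) ≤ ∫⁻ x in centeredBox (Fin n) (2 * Real.pi), w x := by
  have hr : ((lam : ℝ) ^ M) ≠ 0 := pow_ne_zero _ (Nat.cast_ne_zero.2 hlam)
  have hjac : ENNReal.ofReal |((lam : ℝ) ^ M) ^ Module.finrank ℝ (Fin n → ℝ)| =
      ((lam : ℝ≥0∞) ^ n) ^ M := by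
    rw [Module.finrank_fin_fun, abs_of_nonneg (by positivity), pow_right_comm,
      ENNReal.ofReal_pow (by positivity), ENNReal.ofReal_pow (by positivity),
      ENNReal.ofReal_natCast]
  rw [lintegral_comp_inv_smul _
      ((measurable_maskEnergy hτ hw M).indicator measurableSet_centeredBox) hr,
    lintegral_indicator measurableSet_centeredBox, hjac]
  exact pow_mul_setLIntegral_maskEnergy_le hlam hτ hτper hw hwper hqmf M

lemma eventually_mul_enorm_sq_maskProduct_le (hlam : 2 ≤ lam) {c : ℝ≥0∞}
    (hc : ∀ᶠ ξ in 𝓝 0, c ≤ w ξ) (ξ : Fin n → ℝ) :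
    ∀ᶠ M : ℕ in atTop, c * ‖maskProduct lam τ M ξ‖ₑ ^ 2 ≤
      (centeredBox (Fin n) (2 * Real.pi)).indicator (maskEnergy lam τ w M)
        (((lam : ℝ) ^ M)⁻¹ • ξ) := by
  have hl : (1 : ℝ) < lam := by exact_mod_cast hlam
  have hlim : Tendsto (fun M : ℕ => ((lam : ℝ) ^ M)⁻¹ • ξ) atTop (𝓝 0) := by
    simpa using (tendsto_pow_atTop_atTop_of_one_lt hl).inv_tendsto_atTop.smul_const ξ
  filter_upwards [hlim.eventually hc,
    hlim.eventually (centeredBox_mem_nhds_zero (T := 2 * Real.pi))] with M hcM hbox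
  rw [Set.indicator_of_mem hbox, maskEnergy, smul_inv_smul₀ (by positivity), mul_comm]
  exact mul_le_mul_right hcM _

lemma mul_lintegral_enorm_sq_le_of_tendsto_maskProduct (hlam : 2 ≤ lam) (hτ : Measurable τ)
    (hτper : IsMultiPeriodic (2 * Real.pi) τ) (hw : Measurable w)
    (hwper : IsMultiPeriodic (2 * Real.pi) w) {c : ℝ≥0} (hc : ∀ᶠ ξ in 𝓝 0, c ≤ w ξ)
    (hqmf : IsSubQMF lam τ w) {Φ : (Fin n → ℝ) → ℂ}
    (hΦ : ∀ ξ, Tendsto (fun M => maskProduct lam τ M ξ) atTop (𝓝 (Φ ξ))) :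
    c * ∫⁻ ξ, ‖Φ ξ‖ₑ ^ 2 ≤ ∫⁻ x in centeredBox (Fin n) (2 * Real.pi), w x := by
  have hlam₀ : lam ≠ 0 := by omega
  let u (M : ℕ) (ξ : Fin n → ℝ) : ℝ≥0∞ :=
    (centeredBox (Fin n) (2 * Real.pi)).indicator (maskEnergy lam τ w M) (((lam : ℝ) ^ M)⁻¹ • ξ)
  have hu (M : ℕ) : Measurable (u M) :=
    ((measurable_maskEnergy hτ hw M).indicator measurableSet_centeredBox).comp
      (measurable_const_smul _)
  have hlim (ξ : Fin n → ℝ) :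
      Tendsto (fun M => c * ‖maskProduct lam τ M ξ‖ₑ ^ 2) atTop (𝓝 (c * ‖Φ ξ‖ₑ ^ 2)) :=
    ENNReal.Tendsto.const_mul (ENNReal.Tendsto.pow (hΦ ξ).enorm) (.inr ENNReal.coe_ne_top)
  calc c * ∫⁻ ξ, ‖Φ ξ‖ₑ ^ 2 = ∫⁻ ξ, c * ‖Φ ξ‖ₑ ^ 2 :=
        (lintegral_const_mul' _ _ ENNReal.coe_ne_top).symm
    _ ≤ ∫⁻ ξ, liminf (fun M => u M ξ) atTop := lintegral_mono fun ξ =>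
        (hlim ξ).liminf_eq.symm.trans_le
          (liminf_le_liminf (eventually_mul_enorm_sq_maskProduct_le hlam hc ξ))
    _ ≤ liminf (fun M => ∫⁻ ξ, u M ξ) atTop := lintegral_liminf_le hu
    _ ≤ liminf (fun _ => ∫⁻ x in centeredBox (Fin n) (2 * Real.pi), w x) (atTop : Filter ℕ) :=
        liminf_le_liminf <| Eventually.of_forall <|
          lintegral_indicator_maskEnergy_le hlam₀ hτ hτper hw hwper hqmf
    _ = ∫⁻ x in centeredBox (Fin n) (2 * Real.pi), w x := liminf_const _

lemma memLp_two_of_tendsto_maskProduct (hlam : 2 ≤ lam) (hτ : Measurable τ)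
    (hτper : IsMultiPeriodic (2 * Real.pi) τ) (hw : Measurable w)
    (hwper : IsMultiPeriodic (2 * Real.pi) w)
    (hwint : ∫⁻ x in centeredBox (Fin n) (2 * Real.pi), w x ≠ ⊤) {c : ℝ≥0} (hc₀ : c ≠ 0)
    (hc : ∀ᶠ ξ in 𝓝 0, c ≤ w ξ) (hqmf : IsSubQMF lam τ w) {Φ : (Fin n → ℝ) → ℂ}
    (hΦ : ∀ ξ, Tendsto (fun M => maskProduct lam τ M ξ) atTop (𝓝 (Φ ξ))) : MemLp Φ 2 := by
  have hmeas : Measurable Φ :=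
    measurable_of_tendsto_metrizable (measurable_maskProduct hτ) (tendsto_pi_nhds.2 hΦ)
  have hbound : c * ∫⁻ ξ, ‖Φ ξ‖ₑ ^ 2 < ⊤ :=
    (mul_lintegral_enorm_sq_le_of_tendsto_maskProduct hlam hτ hτper hw hwper hc hqmf hΦ).trans_lt
      hwint.lt_top
  refine ⟨hmeas.aestronglyMeasurable, ?_⟩
  rw [eLpNorm_lt_top_iff_lintegral_rpow_enorm_lt_top two_ne_zero ENNReal.ofNat_ne_top]
  simpa using ENNReal.lt_top_of_mul_ne_top_right hbound.ne (ENNReal.coe_ne_zero.2 hc₀)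

end MaskEnergy

/-! ### The multiplication formula for the Fourier transform on L² -/

section MultiplicationFormula

open scoped SchwartzMap

lemma continuous_integral_mul_Lp_two {α : Type*} [MeasurableSpace α] {μ : Measure α}
    (h : Lp ℂ 2 μ) : Continuous fun f : Lp ℂ 2 μ => ∫ x, f x * h x ∂μ := by
  refine (((ContinuousLinearMap.mul ℂ ℂ).lpPairing μ 2 2).flip h).continuous.congr fun f => ?_
  rw [ContinuousLinearMap.flip_apply, ContinuousLinearMap.lpPairing_eq_integral]
  rfl

variable {E : Type*} [NormedAddCommGroup E] [InnerProductSpace ℝ E] [FiniteDimensional ℝ E]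
  [MeasurableSpace E] [BorelSpace E]

lemma integral_fourier_schwartz_mul (s : 𝓢(E, ℂ)) (h : Lp ℂ 2 (volume : Measure E)) :
    ∫ x, 𝓕 s x * h x = ∫ x, s x * (𝓕 h : Lp ℂ 2 (volume : Measure E)) x := by
  have hdistr := DFunLike.congr_fun (Lp.fourier_toTemperedDistribution_eq h) s
  simpa [TemperedDistribution.fourier_apply, Lp.toTemperedDistribution_apply] using hdistr

lemma integral_fourier_mul_Lp_two (f h : Lp ℂ 2 (volume : Measure E)) :
    ∫ x, (𝓕 f : Lp ℂ 2 (volume : Measure E)) x * h x =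
      ∫ x, f x * (𝓕 h : Lp ℂ 2 (volume : Measure E)) x := by
  have hdense : DenseRange (SchwartzMap.toLpCLM ℂ ℂ 2 (volume : Measure E)) :=
    SchwartzMap.denseRange_toLpCLM ENNReal.ofNat_ne_top
  induction f using hdense.induction_on with
  | hp =>
    exact isClosed_eq
      ((continuous_integral_mul_Lp_two h).comp (Lp.fourierTransformₗᵢ E ℂ).continuous)
      (continuous_integral_mul_Lp_two _)
  | ih s =>
    rw [SchwartzMap.toLpCLM_apply, SchwartzMap.toLp_fourier_eq]
    calc ∫ x, (𝓕 s).toLp 2 volume x * h x = ∫ x, 𝓕 s x * h x :=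
          integral_congr_ae (((𝓕 s).coeFn_toLp 2 volume).mul (ae_eq_refl h))
      _ = ∫ x, s x * (𝓕 h : Lp ℂ 2 (volume : Measure E)) x := integral_fourier_schwartz_mul s h
      _ = ∫ x, s.toLp 2 volume x * (𝓕 h : Lp ℂ 2 (volume : Measure E)) x :=
          integral_congr_ae ((s.coeFn_toLp 2 volume).symm.mul (ae_eq_refl _))

lemma fourier_toLp_two_ae_eq {g : E → ℂ} (hg : Integrable g) (hg2 : MemLp g 2) :
    (𝓕 (hg2.toLp g) : Lp ℂ 2 (volume : Measure E)) =ᵐ[volume] 𝓕 g := by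
  have hinner : Continuous fun p : E × E => innerₗ E p.1 p.2 := continuous_inner
  refine ae_eq_of_integral_contDiff_smul_eq ((Lp.memLp _).locallyIntegrable (by norm_num))
    (VectorFourier.fourierIntegral_continuous Real.continuous_fourierChar hinner
      hg).locallyIntegrable fun s hs hsc => ?_
  let σ : 𝓢(E, ℂ) := (hsc.comp_left (g := ((↑) : ℝ → ℂ)) Complex.ofReal_zero).toSchwartzMap
    (Complex.ofRealCLM.contDiff.comp hs)
  have hflip : ∫ x, 𝓕 g x * σ x = ∫ x, g x * 𝓕 σ x := by
    have h := VectorFourier.integral_fourierIntegral_smul_eq_flip (L := innerₗ E)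
      Real.continuous_fourierChar hinner hg (σ.integrable (μ := volume))
    rwa [flip_innerₗ] at h
  calc ∫ x, s x • (𝓕 (hg2.toLp g) : Lp ℂ 2 (volume : Measure E)) x
      = ∫ x, 𝓕 σ x * hg2.toLp g x := (integral_fourier_schwartz_mul σ _).symm
    _ = ∫ x, 𝓕 σ x * g x := integral_congr_ae ((ae_eq_refl _).mul hg2.coeFn_toLp)
    _ = ∫ x, 𝓕 g x * σ x := by simpa only [mul_comm] using hflip.symm
    _ = ∫ x, s x • 𝓕 g x := integral_congr_ae (ae_of_all _ fun x => mul_comm _ _)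

lemma exists_integral_mul_eq_integral_mul_fourier {Φ : E → ℂ} (hΦ : MemLp Φ 2) :
    ∃ f : E → ℂ, MemLp f 2 ∧ ∀ g : E → ℂ, Integrable g → MemLp g 2 →
      ∫ x, Φ x * g x = ∫ x, f x * 𝓕 g x := by
  refine ⟨(𝓕⁻ (hΦ.toLp Φ) : Lp ℂ 2 (volume : Measure E)), Lp.memLp _, fun g hg hg2 => ?_⟩
  have hmul := integral_fourier_mul_Lp_two (𝓕⁻ (hΦ.toLp Φ)) (hg2.toLp g)
  rw [FourierTransform.fourier_fourierInv_eq] at hmul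
  calc ∫ x, Φ x * g x = ∫ x, hΦ.toLp Φ x * hg2.toLp g x :=
        (integral_congr_ae (hΦ.coeFn_toLp.mul hg2.coeFn_toLp)).symm
    _ = ∫ x, (𝓕⁻ (hΦ.toLp Φ) : Lp ℂ 2 (volume : Measure E)) x *
          (𝓕 (hg2.toLp g) : Lp ℂ 2 (volume : Measure E)) x := hmul
    _ = _ := integral_congr_ae ((ae_eq_refl _).mul (fourier_toLp_two_ae_eq hg hg2))

end MultiplicationFormula

lemma memLp_comp_smul {E F : Type*} [NormedAddCommGroup E] [NormedSpace ℝ E]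
    [FiniteDimensional ℝ E] [MeasurableSpace E] [BorelSpace E] [NormedAddCommGroup F]
    {μ : Measure E} [μ.IsAddHaarMeasure] {p : ℝ≥0∞} {f : E → F} (hf : MemLp f p μ) {r : ℝ}
    (hr : r ≠ 0) : MemLp (fun x => f (r • x)) p μ := by
  refine MemLp.comp_of_map (f := (r • ·)) ?_ (by fun_prop)
  rw [Measure.map_addHaar_smul μ hr]
  exact hf.smul_measure ENNReal.ofReal_ne_top

section FourierPair

variable {n : ℕ}

lemma fourierInt_eq_fourier (g : (Fin n → ℝ) → ℂ) (x : Fin n → ℝ) :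
    fourierInt n g x = 𝓕 (fun v : EuclideanSpace ℝ (Fin n) => g v.ofLp)
      (WithLp.toLp 2 ((2 * Real.pi)⁻¹ • x)) := by
  rw [Real.fourier_eq', ← (PiLp.volume_preserving_toLp (Fin n)).integral_comp
    (MeasurableEquiv.toLp 2 (Fin n → ℝ)).measurableEmbedding, fourierInt]
  congr with v
  rw [smul_eq_mul, mul_comm]
  congr 2
  simp only [PiLp.inner_apply, Pi.smul_apply, smul_eq_mul, RCLike.inner_apply, conj_trivial]
  push_cast
  rw [Finset.mul_sum, Finset.mul_sum, Finset.sum_mul]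
  refine Finset.sum_congr rfl fun i _ => ?_
  field_simp

lemma exists_isL2FourierPair {Φ : (Fin n → ℝ) → ℂ} (hΦ : MemLp Φ 2) :
    ∃ φ, IsL2FourierPair n φ Φ := by
  have htoLp := PiLp.volume_preserving_toLp (Fin n)
  have hofLp := PiLp.volume_preserving_ofLp (Fin n)
  have hemb := (MeasurableEquiv.toLp 2 (Fin n → ℝ)).measurableEmbedding
  have hpi : 0 < 2 * Real.pi := Real.two_pi_pos
  obtain ⟨f, hf, hfΦ⟩ := exists_integral_mul_eq_integral_mul_fourier
    (hΦ.comp_measurePreserving hofLp)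
  let φ (x : Fin n → ℝ) : ℂ :=
    ((2 * Real.pi)⁻¹ ^ n : ℝ) • f (WithLp.toLp 2 ((2 * Real.pi)⁻¹ • x))
  have hφ : MemLp φ 2 :=
    (memLp_comp_smul (hf.comp_measurePreserving htoLp) (inv_ne_zero hpi.ne')).const_smul
      ((2 * Real.pi)⁻¹ ^ n : ℝ)
  refine ⟨φ, hφ, hΦ, fun g hg hg2 => ?_⟩
  let G (v : EuclideanSpace ℝ (Fin n)) : ℂ := g v.ofLp
  have hΦg := hfΦ G ((hofLp.integrable_comp hg.aestronglyMeasurable).2 hg)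
    (hg2.comp_measurePreserving hofLp)
  calc ∫ ξ, Φ ξ * g ξ = ∫ v, f v * 𝓕 G v := by
        rw [← hΦg, ← htoLp.integral_comp hemb]
        rfl
    _ = ∫ y : Fin n → ℝ, f (WithLp.toLp 2 y) * 𝓕 G (WithLp.toLp 2 y) :=
        (htoLp.integral_comp hemb _).symm
    _ = (2 * Real.pi)⁻¹ ^ n • ∫ x : Fin n → ℝ, f (WithLp.toLp 2 ((2 * Real.pi)⁻¹ • x)) *
          𝓕 G (WithLp.toLp 2 ((2 * Real.pi)⁻¹ • x)) := by
        rw [Measure.integral_comp_inv_smul_of_nonneg volume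
          (fun y : Fin n → ℝ => f (WithLp.toLp 2 y) * 𝓕 G (WithLp.toLp 2 y)) hpi.le,
          Module.finrank_fin_fun, smul_smul, ← mul_pow, inv_mul_cancel₀ hpi.ne', one_pow, one_smul]
    _ = ∫ x, φ x * fourierInt n g x := by
        simp only [φ, fourierInt_eq_fourier, smul_mul_assoc, integral_smul, G]

end FourierPair

/-! ### Refinable functions from rational masks -/

section InvWeight

variable {lam n : ℕ} (S : RatTrigPoly n)

/-- The weight `1/S` of the oblique sub-QMF condition, as an extended nonnegative real. Only the
real part of `S` enters, and the value is `0` where `S` vanishes or is undefined. -/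
def RatTrigPoly.invWeight (ξ : Fin n → ℝ) : ℝ≥0∞ :=
  ENNReal.ofReal (S ξ).re⁻¹

lemma RatTrigPoly.measurable_invWeight : Measurable S.invWeight :=
  (Complex.measurable_re.comp S.measurable).inv.ennreal_ofReal

lemma RatTrigPoly.isMultiPeriodic_invWeight : IsMultiPeriodic (2 * Real.pi) S.invWeight :=
  S.isMultiPeriodic.comp_left fun z => ENNReal.ofReal z.re⁻¹

lemma RatTrigPoly.invWeight_le_enorm_inv {ξ : Fin n → ℝ} (h : (S ξ).im = 0) :
    S.invWeight ξ ≤ ‖(S ξ)⁻¹‖ₑ := by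
  obtain ⟨r, hr⟩ : ∃ r : ℝ, r = S ξ := ⟨(S ξ).re, Complex.ext rfl h.symm⟩
  rw [RatTrigPoly.invWeight, ← hr, ← Complex.ofReal_inv, ← ofReal_norm, Complex.norm_real,
    Complex.ofReal_re]
  exact ENNReal.ofReal_le_ofReal (le_abs_self _)

lemma RatTrigPoly.setLIntegral_invWeight_ne_top (hreal : ∀ ξ, S.DefinedAt ξ → (S ξ).im = 0)
    (hinv : MemLp (fun ξ => (S ξ)⁻¹) ⊤) {s : Set (Fin n → ℝ)} (hs : volume s < ⊤) :
    ∫⁻ ξ in s, S.invWeight ξ ≠ ⊤ := by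
  have : IsFiniteMeasure (volume.restrict s) := isFiniteMeasure_restrict.2 hs.ne
  have hint : Integrable (fun ξ => (S ξ)⁻¹) (volume.restrict s) :=
    (hinv.restrict s).integrable le_top
  refine ne_top_of_le_ne_top hint.hasFiniteIntegral.ne (lintegral_mono_ae (ae_restrict_of_ae ?_))
  filter_upwards [S.ae_definedAt] with ξ hξ
  exact S.invWeight_le_enorm_inv (hreal ξ hξ)

lemma RatTrigPoly.eventually_half_le_invWeight (h₀ : S 0 = 1) (hcont : ContinuousAt S 0) :
    ∀ᶠ ξ in 𝓝 0, ((1 / 2 : ℝ≥0) : ℝ≥0∞) ≤ S.invWeight ξ := by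
  have hlim : Tendsto S.invWeight (𝓝 0) (𝓝 (S.invWeight 0)) :=
    ENNReal.tendsto_ofReal ((Complex.continuous_re.continuousAt.comp hcont).inv₀ (by simp [h₀]))
  refine hlim.eventually_const_le ?_
  simp [RatTrigPoly.invWeight, h₀]

lemma RatTrigPoly.isSubQMF_invWeight (hlam : lam ≠ 0) {τ : RatTrigPoly n}
    (hnonneg : ∀ ξ, S.DefinedAt ξ → 0 ≤ (S ξ).re) (hne : ∃ ξ, S ξ ≠ 0)
    (h : ∀ ξ, (S.DefinedAt (dil lam n ξ) ∧ S (dil lam n ξ) ≠ 0) →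
      (∀ ρ ∈ Lambda lam n, τ.DefinedAt (gshift lam n ξ ρ) ∧
        S.DefinedAt (gshift lam n ξ ρ) ∧ S (gshift lam n ξ ρ) ≠ 0) →
      0 ≤ (S (dil lam n ξ)).re⁻¹ - ∑ ρ ∈ Lambda lam n,
        ‖τ (gshift lam n ξ ρ)‖ ^ 2 / (S (gshift lam n ξ ρ)).re) :
    IsSubQMF lam τ S.invWeight := by
  have hS := S.ae_definedAt.and (S.ae_ne_zero hne)
  have hdil : ∀ᵐ ξ, S.DefinedAt (dil lam n ξ) ∧ S (dil lam n ξ) ≠ 0 :=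
    (Measure.quasiMeasurePreserving_smul volume (Nat.cast_ne_zero.2 hlam)).ae hS
  have hshift : ∀ᵐ ξ, ∀ ρ ∈ Lambda lam n, τ.DefinedAt (gshift lam n ξ ρ) ∧
      S.DefinedAt (gshift lam n ξ ρ) ∧ S (gshift lam n ξ ρ) ≠ 0 :=
    (Finset.eventually_all _).2 fun ρ _ =>
      (measurePreserving_add_right volume _).quasiMeasurePreserving.ae (τ.ae_definedAt.and hS)
  filter_upwards [hdil, hshift] with ξ hξ hξρ
  have hterm (ρ : Fin n → ℤ) : ‖τ (gshift lam n ξ ρ)‖ₑ ^ 2 * S.invWeight (gshift lam n ξ ρ) =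
      ENNReal.ofReal (‖τ (gshift lam n ξ ρ)‖ ^ 2 / (S (gshift lam n ξ ρ)).re) := by
    rw [div_eq_mul_inv, ENNReal.ofReal_mul (by positivity), ENNReal.ofReal_pow (norm_nonneg _),
      ofReal_norm, RatTrigPoly.invWeight]
  simp only [hterm]
  rw [← ENNReal.ofReal_sum_of_nonneg fun ρ hρ =>
    div_nonneg (by positivity) (hnonneg _ (hξρ ρ hρ).2.1)]
  exact ENNReal.ofReal_le_ofReal (sub_nonneg.1 (h ξ hξ hξρ))

end InvWeight

theorem refinable_function_from_rational_mask_general {lam n : ℕ} (hlam : 2 ≤ lam)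
    {τ : (Fin n → ℝ) → ℂ} (hτ : Measurable τ) (hτper : IsMultiPeriodic (2 * Real.pi) τ)
    (hτ₀ : (fun ξ => τ ξ - 1) =O[𝓝 0] fun ξ => ξ)
    {w : (Fin n → ℝ) → ℝ≥0∞} (hw : Measurable w) (hwper : IsMultiPeriodic (2 * Real.pi) w)
    (hwint : ∫⁻ ξ in centeredBox (Fin n) (2 * Real.pi), w ξ ≠ ⊤)
    {c : ℝ≥0} (hc₀ : c ≠ 0) (hc : ∀ᶠ ξ in 𝓝 0, c ≤ w ξ) (hqmf : IsSubQMF lam τ w) :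
    ∃ Φ : (Fin n → ℝ) → ℂ,
      (∀ ξ, Tendsto (fun M => maskProduct lam τ M ξ) atTop (𝓝 (Φ ξ))) ∧ MemLp Φ 2 ∧
      (∀ ξ, Φ (dil lam n ξ) = τ ξ * Φ ξ) ∧ ∃ φ, IsL2FourierPair n φ Φ := by
  choose Φ hΦ using exists_tendsto_maskProduct (n := n) hlam hτ₀
  have hL2 : MemLp Φ 2 :=
    memLp_two_of_tendsto_maskProduct hlam hτ hτper hw hwper hwint hc₀ hc hqmf hΦ
  have hrefine (ξ : Fin n → ℝ) : Φ (dil lam n ξ) = τ ξ * Φ ξ := by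
    refine tendsto_nhds_unique ((tendsto_add_atTop_iff_nat 1).2 (hΦ (dil lam n ξ))) ?_
    simpa only [maskProduct_succ_dil (show lam ≠ 0 by omega)] using (hΦ ξ).const_mul (τ ξ)
  exact ⟨Φ, hΦ, hL2, hrefine, exists_isL2FourierPair hL2⟩

/-- under the oblique sub-QMF condition, the infinite product
Π_{j=1}^∞ τ(λ^{−j}ξ) converges a.e. to a function Φ ∈ L²(ℝⁿ) with Φ(λξ) = τ(ξ)Φ(ξ)
a.e.; consequently Φ is the Fourier transform of a refinable L² function φ_τ with
refinement mask τ. -/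
theorem refinable_function_from_rational_mask (lam n : ℕ) (hlam : 2 ≤ lam) (hn : 1 ≤ n)
    (S : RatTrigPoly n)
    (hSreal : ∀ ξ, S.DefinedAt ξ → (S ξ).im = 0 ∧ 0 ≤ (S ξ).re)
    (hSne : ∃ ξ, S.DefinedAt ξ ∧ S ξ ≠ 0)
    (hSdef0 : S.DefinedAt 0) (hS0 : S 0 = 1)
    (hScont : ContinuousAt (fun ξ => S ξ) 0)
    (hSinv : MeasureTheory.MemLp (fun ξ : Fin n → ℝ => (S ξ)⁻¹) ⊤ MeasureTheory.volume)
    (τ : RatTrigPoly n) (hτdef : τ.DefinedAt 0) (hτ0 : τ 0 = 1)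
    (hsubQMF : ∀ ξ : Fin n → ℝ,
      (S.DefinedAt (dil lam n ξ) ∧ S (dil lam n ξ) ≠ 0) →
      (∀ ρ ∈ Lambda lam n, τ.DefinedAt (gshift lam n ξ ρ) ∧
        S.DefinedAt (gshift lam n ξ ρ) ∧ S (gshift lam n ξ ρ) ≠ 0) →
      0 ≤ ((S (dil lam n ξ)).re)⁻¹
          - ∑ ρ ∈ Lambda lam n,
              ‖τ (gshift lam n ξ ρ)‖ ^ 2 / (S (gshift lam n ξ ρ)).re) :
    ∃ Φ : (Fin n → ℝ) → ℂ,
      (∀ᵐ ξ : Fin n → ℝ ∂MeasureTheory.volume,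
        Filter.Tendsto
          (fun M : ℕ => ∏ j ∈ Finset.Icc 1 M, τ (fun i => ξ i / (lam : ℝ) ^ j))
          Filter.atTop (𝓝 (Φ ξ))) ∧
      MeasureTheory.MemLp Φ 2 MeasureTheory.volume ∧
      (∀ᵐ ξ : Fin n → ℝ ∂MeasureTheory.volume, Φ (dil lam n ξ) = τ ξ * Φ ξ) ∧
      ∃ φ : (Fin n → ℝ) → ℂ, IsL2FourierPair n φ Φ := by
  have hlam₀ : lam ≠ 0 := by omega
  have hτO : (fun ξ => τ ξ - 1) =O[𝓝 0] fun ξ => ξ := by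
    simpa only [hτ0, sub_zero] using (τ.differentiableAt hτdef).isBigO_sub
  obtain ⟨Φ, hΦ, hL2, hrefine, hpair⟩ := refinable_function_from_rational_mask_general hlam
    τ.measurable τ.isMultiPeriodic hτO S.measurable_invWeight S.isMultiPeriodic_invWeight
    (S.setLIntegral_invWeight_ne_top (fun ξ hξ => (hSreal ξ hξ).1) hSinv volume_centeredBox_lt_top)
    one_half_pos.ne' (S.eventually_half_le_invWeight hS0 hScont)
    (S.isSubQMF_invWeight hlam₀ (fun ξ hξ => (hSreal ξ hξ).2) (hSne.imp fun _ => And.right)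
      hsubQMF)
  exact ⟨Φ, ae_of_all _ hΦ, hL2, ae_of_all _ hrefine, hpair⟩
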